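/- arXiv:math/0512612 — 2 statements merged into one kernel-verified Lean document; each statement's English description precedes it below -/
import Mathlib

section
/- For every n ≥ 5 with n ≡ 1 (mod 4), the alternating configuration of n pegs can be sorted in ⌈n/2⌉ Berge 3-moves. Specifically, writing n = 4i+1, the chain of moves {4i+2, 2i, 4i+1, 2i−1, 4i, 2i−3, 4i−2, 2i−5, ..., ?, 1} (as constructed inductively: sort pegs 3..(2i+2) and (2i+5)..(4i+1) recursively by the solution for n−4, then perform the two moves taking pegs at 2i+4,2i+5,2i+6 to 3,4,5 and pegs at 1,2,3 to 2i+4,2i+5,2i+6) yields a valid sorting. Hence h(n,3) = ⌈n/2⌉ for n ≡ 1 (mod 4), n ≥ 5. -/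
/-- A board configuration has finite support: only finitely many positions hold pegs. -/
def FinSupp (c : ℤ → Option Bool) : Prop := {p : ℤ | (c p).isSome}.Finite

/-- The disorder: number of pegs `p` such that it is NOT the case that the next peg
to the right of `p` exists and has the same color. -/
noncomputable def disorder (c : ℤ → Option Bool) : ℕ :=
  Set.ncard {p : ℤ | (c p).isSome ∧
    ¬ ∃ q : ℤ, p < q ∧ c q = c p ∧ ∀ r : ℤ, p < r → r < q → c r = none}

/-- A Berge `k`-move taking the `k` pegs at positions `i, i+1, ..., i+k-1` to the
`k` vacant positions `j, j+1, ..., j+k-1`, preserving order. -/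
def MoveTo (k : ℕ) (i j : ℤ) (c c' : ℤ → Option Bool) : Prop :=
  (j + k ≤ i ∨ i + k ≤ j) ∧
  (∀ t : ℤ, 0 ≤ t → t < k → (c (i + t)).isSome ∧ c (j + t) = none) ∧
  c' = fun p => if j ≤ p ∧ p < j + k then c (i + (p - j))
    else if i ≤ p ∧ p < i + k then none else c p

/-- A Berge `k`-move from some source to some destination. -/
def BergeMove (k : ℕ) (c c' : ℤ → Option Bool) : Prop :=
  ∃ i j : ℤ, MoveTo k i j c c'

/-- The alternating configuration of `n` pegs: pegs at positions `1,...,n`,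
white (`true`) at odd positions and black (`false`) at even positions. -/
def altConfig (n : ℕ) : ℤ → Option Bool :=
  fun p => if 1 ≤ p ∧ p ≤ (n : ℤ) then some (decide (p % 2 = 1)) else none

/-- A sorted configuration of `n` pegs: a contiguous block of `n` pegs, the first
`⌈n/2⌉` of one color, followed by the remaining `⌊n/2⌋` of the other color. -/
def IsSorted (n : ℕ) (c : ℤ → Option Bool) : Prop :=
  ∃ j : ℤ, ∃ w : Bool,
    (∀ p : ℤ, (c p).isSome ↔ (j ≤ p ∧ p < j + (n : ℤ))) ∧
    (∀ p : ℤ, j ≤ p → p < j + (((n + 1) / 2 : ℕ) : ℤ) → c p = some w) ∧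
    (∀ p : ℤ, j + (((n + 1) / 2 : ℕ) : ℤ) ≤ p → p < j + (n : ℤ) → c p = some (!w))

/-- The alternating configuration of `n` pegs can be sorted in `m` Berge `k`-moves. -/
def SortsIn (k n m : ℕ) : Prop :=
  ∃ f : ℕ → (ℤ → Option Bool), f 0 = altConfig n ∧
    (∀ i < m, BergeMove k (f i) (f (i + 1))) ∧ IsSorted n (f m)

/-! ## Upper bound -/

/-- A 3-move whose source and destination each lie inside `[1,s]` or inside `[s+1,∞)`. -/
def VMove (s : ℤ) (c c' : ℤ → Option Bool) : Prop :=
  ∃ i j : ℤ, (1 ≤ i ∧ i + 2 ≤ s ∨ s + 1 ≤ i) ∧ (1 ≤ j ∧ j + 2 ≤ s ∨ s + 1 ≤ j) ∧ MoveTo 3 i j c c'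

/-- Insert pegs at `1, 2, s+3, s+4`. -/
def ins (s : ℤ) (c : ℤ → Option Bool) : ℤ → Option Bool := fun p =>
  if 3 ≤ p ∧ p ≤ s + 2 then c (p - 2) else if s + 5 ≤ p then c (p - 4)
  else if p = 1 ∨ p = s + 3 then some true else if p = 2 ∨ p = s + 4 then some false else none

/-- The final configuration. -/
def finC (i : ℤ) : ℤ → Option Bool := fun p =>
  if 4 ≤ p ∧ p ≤ 2 * i + 4 then some true
  else if 2 * i + 5 ≤ p ∧ p ≤ 4 * i + 4 then some false else none

def put (i j : ℤ) (c : ℤ → Option Bool) : ℤ → Option Bool :=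
  fun p => if j ≤ p ∧ p < j + 3 then c (i + (p - j))
    else if i ≤ p ∧ p < i + 3 then none else c p

theorem moveTo_iff (i j : ℤ) (c c' : ℤ → Option Bool) : MoveTo 3 i j c c' ↔
    (j + 3 ≤ i ∨ i + 3 ≤ j) ∧ ((c i).isSome ∧ (c (i+1)).isSome ∧ (c (i+2)).isSome) ∧
    (c j = none ∧ c (j+1) = none ∧ c (j+2) = none) ∧ c' = put i j c := by
  unfold MoveTo put
  constructor
  · rintro ⟨h1, h2, h3⟩
    have a := h2 0 (by norm_num) (by norm_num)
    have b := h2 1 (by norm_num) (by norm_num)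
    have d := h2 2 (by norm_num) (by norm_num)
    simp only [add_zero] at a
    exact ⟨by exact_mod_cast h1, ⟨a.1, b.1, d.1⟩, ⟨a.2, b.2, d.2⟩, by exact_mod_cast h3⟩
  · rintro ⟨h1, ⟨a, b, d⟩, ⟨a', b', d'⟩, h3⟩
    refine ⟨by exact_mod_cast h1, ?_, by exact_mod_cast h3⟩
    intro t h0 ht
    have : t = 0 ∨ t = 1 ∨ t = 2 := by push_cast at ht; omega
    rcases this with rfl | rfl | rfl <;> simp_all

theorem ins_lo (s : ℤ) (c : ℤ → Option Bool) (p : ℤ) (h1 : 1 ≤ p) (h2 : p ≤ s) :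
    ins s c (p + 2) = c p := by
  unfold ins; rw [if_pos (by omega)]; congr 1; omega

theorem ins_hi (s : ℤ) (hs : 0 ≤ s) (c : ℤ → Option Bool) (p : ℤ) (h2 : s + 1 ≤ p) :
    ins s c (p + 4) = c p := by
  unfold ins; rw [if_neg (by omega), if_pos (by omega)]; congr 1; omega

theorem vmove_ins (s : ℤ) (hs : 0 ≤ s) (c c' : ℤ → Option Bool) (h : VMove s c c') :
    VMove (s + 2) (ins s c) (ins s c') := by
  obtain ⟨i, j, hi, hj, hm⟩ := h
  have key : ∀ i : ℤ, (1 ≤ i ∧ i + 2 ≤ s ∨ s + 1 ≤ i) → ∃ i' : ℤ,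
      (i' = i + 2 ∧ 1 ≤ i ∧ i + 2 ≤ s ∨ i' = i + 4 ∧ s + 1 ≤ i) ∧ ∀ d : ℤ → Option Bool,
      ins s d i' = d i ∧ ins s d (i'+1) = d (i+1) ∧ ins s d (i'+2) = d (i+2) := by
    rintro i (hi | hi)
    · refine ⟨i + 2, by omega, fun d => ⟨ins_lo s d i (by omega) (by omega), ?_, ?_⟩⟩
      · rw [← ins_lo s d (i+1) (by omega) (by omega)]; congr 1; omega
      · rw [← ins_lo s d (i+2) (by omega) (by omega)]
    · refine ⟨i + 4, by omega, fun d => ⟨ins_hi s hs d i (by omega), ?_, ?_⟩⟩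
      · rw [← ins_hi s hs d (i+1) (by omega)]; congr 1; omega
      · rw [← ins_hi s hs d (i+2) (by omega)]; congr 1; omega
  obtain ⟨i', hi', ki⟩ := key i hi
  obtain ⟨j', hj', kj⟩ := key j hj
  rw [moveTo_iff] at hm
  obtain ⟨h1, h2, h3, h4⟩ := hm
  refine ⟨i', j', by omega, by omega, ?_⟩
  rw [moveTo_iff]
  obtain ⟨a1, a2, a3⟩ := ki c
  obtain ⟨b1, b2, b3⟩ := kj c
  refine ⟨by omega, by rw [a1, a2, a3]; exact h2, by rw [b1, b2, b3]; exact h3, ?_⟩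
  subst h4
  funext p
  by_cases hp : j' ≤ p ∧ p < j' + 3
  · have : p = j' ∨ p = j' + 1 ∨ p = j' + 2 := by omega
    obtain ⟨e1, e2, e3⟩ := kj (put i j c)
    rcases this with rfl | rfl | rfl
    · rw [e1]; simp [put, a1]
    · rw [e2]; simp [put, a2]
    · rw [e3]; simp [put, a3]
  · by_cases hq : i' ≤ p ∧ p < i' + 3
    · have : p = i' ∨ p = i' + 1 ∨ p = i' + 2 := by omega
      obtain ⟨e1, e2, e3⟩ := ki (put i j c)
      have n0 : put i' j' (ins s c) p = none := by
        unfold put; rw [if_neg hp, if_pos hq]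
      rw [n0]
      rcases this with rfl | rfl | rfl
      · rw [e1]; unfold put; rw [if_neg (by omega), if_pos (by omega)]
      · rw [e2]; unfold put; rw [if_neg (by omega), if_pos (by omega)]
      · rw [e3]; unfold put; rw [if_neg (by omega), if_pos (by omega)]
    · have n0 : put i' j' (ins s c) p = ins s c p := by
        unfold put; rw [if_neg hp, if_neg hq]
      rw [n0]
      unfold ins
      split_ifs with g1 g2
      · unfold put; rw [if_neg (by omega), if_neg (by omega)]
      · unfold put; rw [if_neg (by omega), if_neg (by omega)]
      all_goals rfl

def VReach (s : ℤ) (m : ℕ) (c d : ℤ → Option Bool) : Prop :=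
  ∃ f : ℕ → (ℤ → Option Bool), f 0 = c ∧ (∀ t < m, VMove s (f t) (f (t + 1))) ∧ f m = d

theorem VReach.snoc {s : ℤ} {m : ℕ} {c d e : ℤ → Option Bool} (h : VReach s m c d)
    (h' : VMove s d e) : VReach s (m + 1) c e := by
  obtain ⟨f, h0, h1, h2⟩ := h
  refine ⟨fun t => if t ≤ m then f t else e, by simpa using h0, ?_, by simp⟩
  intro t ht
  by_cases h : t < m
  · have := h1 t h
    simpa [h.le, Nat.succ_le_of_lt h] using this
  · have : t = m := by omega
    subst this
    simpa [h2] using h'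

theorem VReach.ins {s : ℤ} (hs : 0 ≤ s) {m : ℕ} {c d : ℤ → Option Bool} (h : VReach s m c d) :
    VReach (s + 2) m (ins s c) (ins s d) := by
  obtain ⟨f, h0, h1, h2⟩ := h
  exact ⟨fun t => _root_.ins s (f t), by simp [h0], fun t ht => vmove_ins s hs _ _ (h1 t ht),
    by simp [h2]⟩

theorem alt_ins (i : ℕ) (hi : 1 ≤ i) :
    altConfig (4 * (i + 1) + 1) = ins (2 * i + 2) (altConfig (4 * i + 1)) := by
  funext p
  unfold altConfig ins
  push_cast
  split_ifs <;> first | omega | rfl | (congr 1; simp; done) | (congr 1; simp; omega)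

theorem reach_all (i : ℕ) (hi : 1 ≤ i) :
    VReach (2 * i + 2) (2 * i + 1) (altConfig (4 * i + 1)) (finC i) := by
  induction i, hi using Nat.le_induction with
  | base =>
    have h0 : VReach 4 0 (altConfig 5) (altConfig 5) := ⟨fun _ => altConfig 5, rfl, by simp, rfl⟩
    have h1 := h0.snoc (e := put 2 6 (altConfig 5))
      ⟨2, 6, by norm_num, by norm_num, (moveTo_iff _ _ _ _).2
        ⟨by norm_num, by simp [altConfig], by simp [altConfig], rfl⟩⟩
    have h2 := h1.snoc (e := put 5 2 (put 2 6 (altConfig 5)))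
      ⟨5, 2, by norm_num, by norm_num, (moveTo_iff _ _ _ _).2
        ⟨by norm_num, by simp [altConfig, put], by simp [altConfig, put], rfl⟩⟩
    have h3 := h2.snoc (e := put 1 5 (put 5 2 (put 2 6 (altConfig 5))))
      ⟨1, 5, by norm_num, by norm_num, (moveTo_iff _ _ _ _).2
        ⟨by norm_num, by simp [altConfig, put], by simp [altConfig, put], rfl⟩⟩
    have e : put 1 5 (put 5 2 (put 2 6 (altConfig 5))) = finC 1 := by
      funext p
      by_cases hp : 1 ≤ p ∧ p ≤ 8
      · have : p = 1 ∨ p = 2 ∨ p = 3 ∨ p = 4 ∨ p = 5 ∨ p = 6 ∨ p = 7 ∨ p = 8 := by omega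
        rcases this with rfl | rfl | rfl | rfl | rfl | rfl | rfl | rfl <;> decide
      · have : finC 1 p = none := by
          unfold finC; rw [if_neg (by omega), if_neg (by omega)]
        rw [this]
        unfold put altConfig
        push_cast
        split_ifs <;> first | rfl | omega
    rw [e] at h3
    exact h3
  | succ i hi ih =>
    have h0 := ih.ins (by omega)
    rw [← alt_ins i hi] at h0
    set c := ins (2 * i + 2) (finC i) with hc
    have h1 := h0.snoc (e := put (2 * i + 6) 3 c)
      ⟨2 * i + 6, 3, by omega, by omega, (moveTo_iff _ _ _ _).2 ⟨by omega, ?_, ?_, rfl⟩⟩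
    have h2 := h1.snoc (e := put 1 (2 * i + 6) (put (2 * i + 6) 3 c))
      ⟨1, 2 * i + 6, by omega, by omega, (moveTo_iff _ _ _ _).2 ⟨by omega, ?_, ?_, rfl⟩⟩
    · have e : put 1 (2 * i + 6) (put (2 * i + 6) 3 c) = finC ((i + 1 : ℕ) : ℤ) := by
        funext p
        simp only [hc, put, ins, finC]
        push_cast
        grind
      rw [e] at h2
      have e1 : (2 * ((i + 1 : ℕ) : ℤ) + 2) = 2 * i + 2 + 2 := by push_cast; ring
      rw [e1]
      exact h2
    all_goals
      simp only [hc, put, ins, finC]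
      refine ⟨?_, ?_, ?_⟩ <;> grind

theorem sorted_fin (i : ℕ) : IsSorted (4 * i + 1) (finC i) := by
  have e : (((4 * i + 1 + 1) / 2 : ℕ) : ℤ) = 2 * i + 1 := by omega
  refine ⟨4, true, ?_, ?_, ?_⟩
  · intro p; unfold finC; push_cast
    split_ifs <;> simp <;> omega
  · intro p h1 h2; rw [e] at h2
    unfold finC; rw [if_pos (by omega)]
  · intro p h1 h2; rw [e] at h1; push_cast at h2
    unfold finC; rw [if_neg (by omega), if_pos (by omega)]; rfl

theorem upper (i : ℕ) (hi : 1 ≤ i) : SortsIn 3 (4 * i + 1) (2 * i + 1) := by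
  obtain ⟨f, h0, h1, h2⟩ := reach_all i hi
  refine ⟨f, h0, ?_, h2 ▸ sorted_fin i⟩
  intro t ht
  obtain ⟨a, b, _, _, h⟩ := h1 t ht
  exact ⟨a, b, h⟩

/-! ## Lower bound -/

/-- Good positions: a peg followed immediately by a peg of the same color. -/
def good (c : ℤ → Option Bool) : Set ℤ := {p | (c p).isSome ∧ c (p + 1) = c p}

theorem good_fin {c : ℤ → Option Bool} (h : FinSupp c) : (good c).Finite :=
  Set.Finite.subset h fun _ hp => hp.1

theorem put_fin {c : ℤ → Option Bool} (h : FinSupp c) (i j : ℤ) : FinSupp (put i j c) := by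
  refine Set.Finite.subset (h.union (Set.finite_Icc j (j + 2))) ?_
  intro p hp
  simp only [Set.mem_setOf_eq, put] at hp
  simp only [Set.mem_union, Set.mem_setOf_eq, Set.mem_Icc]
  split_ifs at hp with h1 h2
  · right; omega
  · simp at hp
  · exact Or.inl hp

open Classical in
theorem ncard_diff_pair {A : Set ℤ} (hA : A.Finite) (x y : ℤ) (hxy : x ≠ y) :
    (A \ {x, y}).ncard + (if x ∈ A then 1 else 0) + (if y ∈ A then 1 else 0) = A.ncard := by
  have e : A \ {x, y} = (A \ {x}) \ {y} := by ext p; simp; tauto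
  rw [e]
  have hB : (A \ {x}).Finite := hA.subset Set.diff_subset
  have h1 : (A \ {x}).ncard + (if x ∈ A then 1 else 0) = A.ncard := by
    split_ifs with h
    · exact Set.ncard_diff_singleton_add_one h hA
    · rw [Set.diff_singleton_eq_self h]; rfl
  have h2 : ((A \ {x}) \ {y}).ncard + (if y ∈ A then 1 else 0) = (A \ {x}).ncard := by
    split_ifs with h
    · exact Set.ncard_diff_singleton_add_one ⟨h, by simpa using hxy.symm⟩ hB
    · rw [Set.diff_singleton_eq_self (fun h' => h h'.1)]; rfl
  omega

open Classical in
theorem good_put {c : ℤ → Option Bool} (hc : FinSupp c) (i j : ℤ) (hij : j + 3 ≤ i ∨ i + 3 ≤ j) :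
    (good (put i j c)).ncard + (if i - 1 ∈ good c then 1 else 0) + (if i + 2 ∈ good c then 1 else 0)
    ≤ (good c).ncard + (if j - 1 ∈ good (put i j c) then 1 else 0)
      + (if j + 2 ∈ good (put i j c) then 1 else 0) := by
  have h1 := ncard_diff_pair (good_fin hc) (i - 1) (i + 2) (by omega)
  have h2 := ncard_diff_pair (good_fin (put_fin hc i j)) (j - 1) (j + 2) (by omega)
  have h3 : (good (put i j c) \ {j - 1, j + 2}).ncard ≤ (good c \ {i - 1, i + 2}).ncard := by
    have hT : (good c \ {i - 1, i + 2}).Finite := (good_fin hc).subset Set.diff_subset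
    refine le_trans (Set.ncard_le_ncard (t := (fun p => if p = i then j else if p = i + 1 then j + 1
      else p) '' (good c \ {i - 1, i + 2})) ?_ (hT.image _)) (Set.ncard_image_le hT)
    rintro p ⟨⟨hp1, hp2⟩, hp3⟩
    simp only [Set.mem_insert_iff, Set.mem_singleton_iff, not_or] at hp3
    simp only [put] at hp1 hp2
    simp only [Set.mem_image, Set.mem_diff, Set.mem_insert_iff, Set.mem_singleton_iff, good,
      Set.mem_setOf_eq, not_or]
    by_cases e0 : p = j
    · subst e0
      refine ⟨i, ⟨⟨?_, ?_⟩, by omega, by omega⟩, by simp⟩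
      · simpa using hp1
      · simpa using hp2
    by_cases e1 : p = j + 1
    · subst e1
      refine ⟨i + 1, ⟨⟨?_, ?_⟩, by omega, by omega⟩, by simp⟩
      · simpa using hp1
      · have : i + 1 + 1 = i + (j + 1 + 1 - j) := by ring
        rw [if_pos (by omega), if_pos (by omega)] at hp2
        rw [this, hp2]; congr 1; omega
    have q1 : ¬ (j ≤ p ∧ p < j + 3) := by omega
    have q2 : ¬ (j ≤ p + 1 ∧ p + 1 < j + 3) := by omega
    rw [if_neg q1] at hp1 hp2
    rw [if_neg q2] at hp2
    by_cases e2 : i ≤ p ∧ p < i + 3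
    · rw [if_pos e2] at hp1; simp at hp1
    rw [if_neg e2] at hp1 hp2
    by_cases e3 : i ≤ p + 1 ∧ p + 1 < i + 3
    · rw [if_pos e3] at hp2; rw [← hp2] at hp1; simp at hp1
    rw [if_neg e3] at hp2
    refine ⟨p, ⟨⟨hp1, hp2⟩, by omega, by omega⟩, ?_⟩
    rw [if_neg (by omega), if_neg (by omega)]
  omega

def Contig (c : ℤ → Option Bool) : Prop :=
  ∃ l r : ℤ, ∀ p, (c p).isSome ↔ (l ≤ p ∧ p ≤ r)

def Holed (c : ℤ → Option Bool) (col : Bool) : Prop :=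
  ∃ l h r : ℤ, l < h ∧ h + 3 ≤ r ∧ (∀ p, (c p).isSome ↔ (l ≤ p ∧ p ≤ r ∧ ¬ (h ≤ p ∧ p ≤ h + 2))) ∧
    c l = some true ∧ c r = some true ∧ c (h - 1) = some col ∧ c (h + 3) = some col

theorem move_gain_le {c c' : ℤ → Option Bool} (hc : FinSupp c) (h : BergeMove 3 c c') :
    (good c').ncard ≤ (good c).ncard + 2 := by
  obtain ⟨i, j, h⟩ := h
  rw [moveTo_iff] at h
  obtain ⟨h1, h2, h3, rfl⟩ := h
  have := good_put hc i j h1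
  split_ifs at this <;> omega

theorem contig_gain {c c' : ℤ → Option Bool} (hc : FinSupp c) (h : BergeMove 3 c c')
    (hC : Contig c) : (good c').ncard ≤ (good c).ncard + 1 := by
  obtain ⟨i, j, h⟩ := h
  rw [moveTo_iff] at h
  obtain ⟨h1, h2, h3, rfl⟩ := h
  obtain ⟨l, r, hC⟩ := hC
  by_contra hlt
  have := good_put hc i j h1
  have hh : j - 1 ∈ good (put i j c) ∧ j + 2 ∈ good (put i j c) := by
    split_ifs at this <;> first | omega | tauto
  obtain ⟨⟨a1, a2⟩, b1, b2⟩ := hh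
  rw [← b2] at b1
  have n1 := hC j
  have n2 := hC i
  have n3 : (c (j - 1)).isSome := by
    unfold put at a1; rw [if_neg (by omega)] at a1
    split_ifs at a1
    · simp at a1
    · exact a1
  have n4 : (c (j + 3)).isSome := by
    have e : j + 2 + 1 = j + 3 := by ring
    rw [e] at b1
    unfold put at b1; rw [if_neg (by omega)] at b1
    split_ifs at b1
    · simp at b1
    · exact b1
  rw [hC] at n3 n4
  rw [h3.1] at n1
  simp at n1
  omega

theorem holed_step {c c' : ℤ → Option Bool} {col : Bool} (hc : FinSupp c) (h : BergeMove 3 c c')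
    (hC : Holed c col) (hg : (good c).ncard + 2 ≤ (good c').ncard) :
    Holed c' (!col) ∨ (Contig c' ∧ col = true) := by
  obtain ⟨i, j, h⟩ := h
  rw [moveTo_iff] at h
  obtain ⟨h1, ⟨s0, s1, s2⟩, ⟨d0, d1, d2⟩, rfl⟩ := h
  obtain ⟨l, h, r, lh, hr, hC, cl, cr, ch, ch'⟩ := hC
  have := good_put hc i j h1
  have hh : (j - 1 ∈ good (put i j c) ∧ j + 2 ∈ good (put i j c)) ∧
      (i - 1 ∉ good c ∧ i + 2 ∉ good c) := by
    split_ifs at this <;> first | omega | tauto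
  obtain ⟨⟨⟨a1, a2⟩, b1, b2⟩, g1, g2⟩ := hh
  rw [← b2] at b1
  have e : j + 2 + 1 = j + 3 := by ring
  rw [e] at b1 b2
  have n3 : (c (j - 1)).isSome ∧ ¬ (i ≤ j - 1 ∧ j - 1 < i + 3) := by
    unfold put at a1; rw [if_neg (by omega)] at a1
    split_ifs at a1
    · simp at a1
    · exact ⟨a1, by assumption⟩
  have n4 : (c (j + 3)).isSome ∧ ¬ (i ≤ j + 3 ∧ j + 3 < i + 3) := by
    unfold put at b1; rw [if_neg (by omega)] at b1
    split_ifs at b1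
    · simp at b1
    · exact ⟨b1, by assumption⟩
  have A : c i = c (j - 1) := by
    unfold put at a2
    rw [if_pos (by omega), if_neg (by omega), if_neg n3.2] at a2
    rw [← a2]; congr 1; omega
  have B : c (i + 2) = c (j + 3) := by
    unfold put at b2
    rw [if_neg (by omega), if_neg n4.2, if_pos (by omega)] at b2
    rw [b2]; congr 1; omega
  have hj : j = h := by
    have k0 := hC j
    have k1 := (hC (j - 1)).1 n3.1
    have k2 := (hC (j + 3)).1 n4.1
    have k3 := hC (j + 1)
    have k4 := hC (j + 2)
    rw [d0] at k0; rw [d1] at k3; rw [d2] at k4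
    simp at k0 k3 k4
    omega
  subst hj
  rw [ch] at A
  rw [ch'] at B
  have i0 := (hC i).1 s0
  have i1 := (hC (i+1)).1 s1
  have i2 := (hC (i+2)).1 s2
  -- support of the new configuration
  have supp : ∀ p, (put i j c p).isSome ↔ (l ≤ p ∧ p ≤ r ∧ ¬ (i ≤ p ∧ p ≤ i + 2)) := by
    intro p
    unfold put
    split_ifs with q1 q2
    · have : i + (p - j) = i ∨ i + (p - j) = i + 1 ∨ i + (p - j) = i + 2 := by omega
      have : (c (i + (p - j))).isSome := by rcases this with q | q | q <;> rw [q] <;> assumption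
      simp only [this, true_iff]; omega
    · simp; omega
    · rw [hC]; omega
  have other : ∀ p, ¬ (j ≤ p ∧ p < j + 3) → ¬ (i ≤ p ∧ p < i + 3) → put i j c p = c p := by
    intro p q1 q2; unfold put; rw [if_neg q1, if_neg q2]
  by_cases x1 : i = l
  · right
    refine ⟨⟨i + 3, r, ?_⟩, ?_⟩
    · intro p; rw [supp]; omega
    · subst x1; rw [cl] at A; simpa using A.symm
  by_cases x2 : i + 2 = r
  · right
    refine ⟨⟨l, i - 1, ?_⟩, ?_⟩
    · intro p; rw [supp]; omega
    · subst x2; rw [cr] at B; simpa using B.symm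
  left
  refine ⟨l, i, r, by omega, by omega, supp, ?_, ?_, ?_, ?_⟩
  · rw [other _ (by omega) (by omega), cl]
  · rw [other _ (by omega) (by omega), cr]
  · have k := (hC (i - 1)).2 (by omega)
    rw [other _ (by omega) (by omega)]
    have g : ¬ (c (i - 1) = some col) := by
      intro q; apply g1; refine ⟨k, ?_⟩
      rw [q, ← A]; congr 1; omega
    revert k g; generalize c (i - 1) = z
    cases z <;> simp; rename_i z; cases z <;> cases col <;> simp
  · have k := (hC (i + 3)).2 (by omega)
    rw [other _ (by omega) (by omega)]
    have g : ¬ (c (i + 3) = some col) := by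
      intro q; apply g2; refine ⟨s2, ?_⟩
      rw [B, ← q]; congr 1; omega
    revert k g; generalize c (i + 3) = z
    cases z <;> simp; rename_i z; cases z <;> cases col <;> simp

theorem alt_good (n : ℕ) : good (altConfig n) = ∅ := by
  ext p
  simp only [good, altConfig, Set.mem_setOf_eq, Set.mem_empty_iff_false, iff_false]
  rintro ⟨h1, h2⟩
  split_ifs at h1 h2
  · simp at h2; omega
  · simp at h1

theorem alt_finSupp (n : ℕ) : FinSupp (altConfig n) := by
  refine Set.Finite.subset (Set.finite_Icc 1 (n : ℤ)) ?_
  intro p hp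
  simp only [altConfig, Set.mem_setOf_eq] at hp
  split_ifs at hp with h
  · exact h
  · simp at hp

theorem alt_some (n : ℕ) (p : ℤ) : (altConfig n p).isSome ↔ (1 ≤ p ∧ p ≤ n) := by
  unfold altConfig; split_ifs with h <;> simp [h]

theorem alt_val (n : ℕ) (p : ℤ) (h1 : 1 ≤ p) (h2 : p ≤ n) :
    altConfig n p = some (decide (p % 2 = 1)) := by
  unfold altConfig; rw [if_pos ⟨h1, h2⟩]

theorem first_step {n : ℕ} (hn : n % 2 = 1) {c' : ℤ → Option Bool}
    (h : BergeMove 3 (altConfig n) c') :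
    (good c').ncard ≤ 1 ∧ ((good c').ncard = 1 → Holed c' false ∨ Contig c') := by
  have hc := alt_finSupp n
  have hz : (good (altConfig n)).ncard = 0 := by rw [alt_good]; simp
  refine ⟨?_, ?_⟩
  · have := contig_gain hc h ⟨1, n, alt_some n⟩
    omega
  intro hg
  obtain ⟨i, j, h⟩ := h
  rw [moveTo_iff] at h
  obtain ⟨h1, ⟨s0, s1, s2⟩, ⟨d0, d1, d2⟩, rfl⟩ := h
  have hgp := good_put hc i j h1
  have hh : j - 1 ∈ good (put i j (altConfig n)) ∨ j + 2 ∈ good (put i j (altConfig n)) := by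
    split_ifs at hgp <;> first | omega | tauto
  rw [alt_some] at s0 s1 s2
  have k0 := alt_some n j
  have k1 := alt_some n (j + 1)
  have k2 := alt_some n (j + 2)
  rw [d0] at k0; rw [d1] at k1; rw [d2] at k2
  simp at k0 k1 k2
  have other : ∀ p, ¬ (j ≤ p ∧ p < j + 3) → ¬ (i ≤ p ∧ p < i + 3) →
      put i j (altConfig n) p = altConfig n p := by
    intro p q1 q2; unfold put; rw [if_neg q1, if_neg q2]
  have supp : ∀ p, (put i j (altConfig n) p).isSome ↔
      ((j ≤ p ∧ p < j + 3) ∨ (1 ≤ p ∧ p ≤ n ∧ ¬ (i ≤ p ∧ p < i + 3))) := by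
    intro p
    unfold put
    split_ifs with q1 q2
    · rw [alt_some]; omega
    · simp; omega
    · rw [alt_some]; omega
  have inb : ∀ t, 0 ≤ t → t < 3 → put i j (altConfig n) (j + t) = altConfig n (i + t) := by
    intro t t0 t1; unfold put; rw [if_pos (by omega)]; congr 1; omega
  have inb0 : put i j (altConfig n) j = altConfig n i := by simpa using inb 0 (by norm_num) (by norm_num)
  have inb2 := inb 2 (by norm_num) (by norm_num)
  rcases hh with ⟨g1, g2⟩ | ⟨g1, g2⟩
  · have p1 := (supp _).1 g1
    have e : j - 1 + 1 = j := by ring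
    have hj : j = n + 1 := by omega
    rw [e, inb0, other _ (by omega) (by omega), alt_val _ _ (by omega) (by omega),
      alt_val _ _ (by omega) (by omega)] at g2
    have par : i % 2 = 1 := by
      simp at g2; omega
    by_cases x : i = 1
    · right; refine ⟨4, n + 3, fun p => ?_⟩; rw [supp]; omega
    left
    refine ⟨1, i, n + 3, by omega, by omega, fun p => ?_, ?_, ?_, ?_, ?_⟩
    · rw [supp]; omega
    · rw [other _ (by omega) (by omega), alt_val _ _ (by omega) (by omega)]; simp
    · have : (n : ℤ) + 3 = j + 2 := by omega
      rw [this, inb2, alt_val _ _ (by omega) (by omega)]; simp; omega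
    · rw [other _ (by omega) (by omega), alt_val _ _ (by omega) (by omega)]; simp; omega
    · rw [other _ (by omega) (by omega), alt_val _ _ (by omega) (by omega)]; simp; omega
  · rw [← g2] at g1
    have p1 := (supp _).1 g1
    have hj : j = -2 := by omega
    rw [inb2, other _ (by omega) (by omega), alt_val _ _ (by omega) (by omega),
      alt_val _ _ (by omega) (by omega)] at g2
    have par : i % 2 = 1 := by
      simp at g2; omega
    by_cases x : i + 2 = n
    · right; refine ⟨-2, i - 1, fun p => ?_⟩; rw [supp]; omega
    left
    refine ⟨-2, i, n, by omega, by omega, fun p => ?_, ?_, ?_, ?_, ?_⟩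
    · rw [supp]; omega
    · rw [← hj, inb0, alt_val _ _ (by omega) (by omega)]; simp; omega
    · rw [other _ (by omega) (by omega), alt_val _ _ (by omega) (by omega)]; simp; omega
    · rw [other _ (by omega) (by omega), alt_val _ _ (by omega) (by omega)]; simp; omega
    · rw [other _ (by omega) (by omega), alt_val _ _ (by omega) (by omega)]; simp; omega

theorem sorted_good {n : ℕ} (hn : 5 ≤ n) {c : ℤ → Option Bool} (hf : FinSupp c)
    (h : IsSorted n c) : n - 2 ≤ (good c).ncard := by
  obtain ⟨j, w, h1, h2, h3⟩ := h
  set k : ℤ := (((n + 1) / 2 : ℕ) : ℤ) with hk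
  have sub : ((Finset.Ico j (j + n - 1)).erase (j + k - 1) : Finset ℤ) ⊆ (good_fin hf).toFinset := by
    intro p hp
    simp only [Finset.mem_erase, Finset.mem_Ico] at hp
    simp only [Set.Finite.mem_toFinset]
    refine ⟨(h1 p).2 (by omega), ?_⟩
    by_cases q : p < j + k - 1
    · rw [h2 p (by omega) (by omega), h2 (p + 1) (by omega) (by omega)]
    · rw [h3 p (by omega) (by omega), h3 (p + 1) (by omega) (by omega)]
  have := Finset.card_le_card sub
  rw [Finset.card_erase_of_mem (by rw [Finset.mem_Ico]; omega), Int.card_Ico,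
    ← Set.ncard_eq_toFinset_card _ (good_fin hf)] at this
  omega

theorem lower (i m : ℕ) (hi : 1 ≤ i) (h : SortsIn 3 (4 * i + 1) m) : 2 * i + 1 ≤ m := by
  obtain ⟨f, h0, hm, hs⟩ := h
  have fin : ∀ t ≤ m, FinSupp (f t) := by
    intro t
    induction t with
    | zero => intro _; rw [h0]; exact alt_finSupp _
    | succ t ih =>
      intro ht
      obtain ⟨a, b, hab⟩ := hm t (by omega)
      rw [moveTo_iff] at hab
      rw [hab.2.2.2]
      exact put_fin (ih (by omega)) _ _
  have key : ∀ t, t + 1 ≤ m → (good (f (t + 1))).ncard ≤ 2 * t + 1 ∧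
      ((good (f (t + 1))).ncard = 2 * t + 1 →
        Holed (f (t + 1)) (decide (t % 2 = 1)) ∨ (Contig (f (t + 1)) ∧ t % 2 = 0)) := by
    intro t
    induction t with
    | zero =>
      intro ht
      have := hm 0 (by omega)
      rw [h0] at this
      simpa using first_step (by omega) this
    | succ t ih =>
      intro ht
      obtain ⟨i1, i2⟩ := ih (by omega)
      have mv := hm (t + 1) (by omega)
      have fs := fin (t + 1) (by omega)
      have g := move_gain_le fs mv
      refine ⟨by omega, fun e => ?_⟩
      rcases i2 (by omega) with H | ⟨H, _⟩
      · rcases holed_step fs mv H (by omega) with H' | ⟨H', q⟩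
        · left
          have : (!decide (t % 2 = 1)) = decide ((t + 1) % 2 = 1) := by
            rw [← decide_not]; congr 1; simp; omega
          rwa [this] at H'
        · right; refine ⟨H', ?_⟩
          simp at q; omega
      · have := contig_gain fs mv H; omega
  have sg := sorted_good (by omega) (fin m le_rfl) hs
  rcases m with _ | m
  · rw [h0, alt_good] at sg; simp at sg; omega
  obtain ⟨k1, k2⟩ := key m le_rfl
  by_contra hlt
  rcases k2 (by omega) with H | ⟨_, H⟩
  · obtain ⟨l, h, r, a, b, H, _⟩ := H
    obtain ⟨j, w, S, _⟩ := hs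
    have q0 := H h
    have q1 := H l
    have q2 := H r
    rw [S] at q0 q1 q2
    omega
  · omega

theorem h_three_moves_one_mod_four (n : ℕ) (hn : 5 ≤ n) (hmod : n % 4 = 1) :
    IsLeast {m : ℕ | SortsIn 3 n m} ((n + 1) / 2) := by
  obtain ⟨i, rfl⟩ : ∃ i, n = 4 * i + 1 := ⟨n / 4, by omega⟩
  have e : (4 * i + 1 + 1) / 2 = 2 * i + 1 := by omega
  rw [e]
  exact ⟨upper i (by omega), fun m hm => lower i m (by omega) hm⟩
end

section
/- For every n ≥ 16 with n ≡ 0 (mod 4), the alternating configuration of n pegs can be sorted in ⌈n/2⌉ + 1 Berge 3-moves; hence ⌈n/2⌉ ≤ h(n,3) ≤ ⌈n/2⌉ + 1 for such n. The solution for n = 4i ≥ 16: perform the 2 chained moves {4i+1, 2, 4i−3} (triple at 2 goes to 4i+1, triple at 4i−3 goes to 2), then sort the 4i−10 pegs at positions 7,...,2i+4 and 2i+7,...,4i−2... (i.e., the middle 4i−10 pegs, ignoring the six leftmost and four rightmost pegs) using the solution for n−10 ≡ 2 (mod 4) shifted six places right, then perform the 4 chained moves {7, 4i, 6, 2i+2,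 1}. -/
/-! ### Upper bound: the solution, on lists of cells -/

namespace Berge

/-- A move on a list of cells. -/
def LMove (L L' : List (Option Bool)) : Prop :=
  ∃ (A B C : List (Option Bool)) (x y z : Bool),
    (L = A ++ [some x, some y, some z] ++ B ++ [none, none, none] ++ C ∧
      L' = A ++ [none, none, none] ++ B ++ [some x, some y, some z] ++ C) ∨
    (L = A ++ [none, none, none] ++ B ++ [some x, some y, some z] ++ C ∧
      L' = A ++ [some x, some y, some z] ++ B ++ [none, none, none] ++ C)

/-- `m` list moves lead from the first list to the second. -/
inductive Reach : ℕ → List (Option Bool) → List (Option Bool) → Prop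
  | refl (L) : Reach 0 L L
  | head {m L L' L''} : LMove L L' → Reach m L' L'' → Reach (m + 1) L L''

theorem LMove.context {L L'} (h : LMove L L') (P Q : List (Option Bool)) :
    LMove (P ++ L ++ Q) (P ++ L' ++ Q) := by
  obtain ⟨A, B, C, x, y, z, ⟨h1, h2⟩ | ⟨h1, h2⟩⟩ := h
  · exact ⟨P ++ A, B, C ++ Q, x, y, z, Or.inl ⟨by simp [h1], by simp [h2]⟩⟩
  · exact ⟨P ++ A, B, C ++ Q, x, y, z, Or.inr ⟨by simp [h1], by simp [h2]⟩⟩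

theorem Reach.context {m L L'} (h : Reach m L L') (P Q : List (Option Bool)) :
    Reach m (P ++ L ++ Q) (P ++ L' ++ Q) := by
  induction h with
  | refl L => exact .refl _
  | head h _ ih => exact .head (h.context P Q) ih

theorem Reach.trans {m k L L' L''} (h : Reach m L L') (h' : Reach k L' L'') :
    Reach (k + m) L L'' := by
  induction h with
  | refl L => exact h'
  | head h _ ih => exact .head h (ih h')

theorem LMove.right (A B C : List (Option Bool)) (x y z : Bool) {L L'}
    (h : L = A ++ [some x, some y, some z] ++ B ++ [none, none, none] ++ C)
    (h' : L' = A ++ [none, none, none] ++ B ++ [some x, some y, some z] ++ C) : LMove L L' :=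
  ⟨A, B, C, x, y, z, Or.inl ⟨h, h'⟩⟩

theorem LMove.left (A B C : List (Option Bool)) (x y z : Bool) {L L'}
    (h : L = A ++ [none, none, none] ++ B ++ [some x, some y, some z] ++ C)
    (h' : L' = A ++ [some x, some y, some z] ++ B ++ [none, none, none] ++ C) : LMove L L' :=
  ⟨A, B, C, x, y, z, Or.inr ⟨h, h'⟩⟩

/-- `k` copies of the two-cell word `x (!x)`. -/
def alt (x : Bool) : ℕ → List (Option Bool)
  | 0 => []
  | k + 1 => some x :: some (!x) :: alt x k

/-- `k` pegs of colour `x`. -/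
def rep (x : Bool) : ℕ → List (Option Bool)
  | 0 => []
  | k + 1 => some x :: rep x k

theorem alt_succ' (x : Bool) (k : ℕ) : alt x (k + 1) = alt x k ++ [some x, some (!x)] := by
  induction k with
  | zero => rfl
  | succ k ih =>
    conv_lhs => rw [alt, ih]
    rfl

theorem alt_add (x : Bool) (k l : ℕ) : alt x (k + l) = alt x k ++ alt x l := by
  induction k with
  | zero => simp [alt]
  | succ k ih => rw [Nat.add_right_comm, alt, ih]; rfl

theorem cons_alt (x : Bool) (k : ℕ) : some x :: alt (!x) k = alt x k ++ [some x] := by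
  induction k with
  | zero => rfl
  | succ k ih => rw [alt, alt, Bool.not_not, ih]; rfl

theorem rep_add (x : Bool) (k l : ℕ) : rep x (k + l) = rep x k ++ rep x l := by
  induction k with
  | zero => simp [rep]
  | succ k ih => rw [Nat.add_right_comm, rep, ih]; rfl

/-- Intermediate state of the solution for `m ≡ 2 (mod 4)`. -/
def state (a p q : ℕ) : List (Option Bool) :=
  alt true a ++ [some true, some false, some false] ++ (rep true p ++ alt false a)
    ++ [none, none, none] ++ rep false q

theorem reach_state (a p q : ℕ) : Reach (2 * a + 1) (state a p q)
    ([none, none, none] ++ rep true (p + 2 * a + 1) ++ rep false (q + 2 * a + 2)) := by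
  induction a generalizing p q with
  | zero =>
    refine .head (.right [] (rep true p) (rep false q) true false false ?_ ?_) (.refl _)
    · simp [state, alt]
    · rw [Nat.add_comm _ 2, rep_add true, rep_add false]
      simp [rep]
  | succ a ih =>
    refine .head (.right _ _ _ true false false rfl rfl) ?_
    refine .head (.left (alt true (a + 1)) (rep true p ++ alt false a)
      ([some false, some false] ++ rep false q) false true true ?_ rfl) ?_
    · simp [alt_succ']
    · have := ih (p + 2) (q + 2)
      have e : state a (p + 2) (q + 2) = alt true (a + 1) ++ [some false, some true, some true] ++
          (rep true p ++ alt false a) ++ [none, none, none] ++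
          ([some false, some false] ++ rep false q) := by
        rw [Nat.add_comm q, Nat.add_comm p]
        simp [state, alt_succ', rep_add, rep]
      rw [e] at this
      rw [show p + 2 * (a + 1) + 1 = p + 2 + 2 * a + 1 by ring,
        show q + 2 * (a + 1) + 2 = q + 2 + 2 * a + 2 by ring]
      exact this

/-- The solution for `4k + 6` pegs. -/
theorem reach_two_mod_four (k : ℕ) : Reach (2 * k + 3)
    (alt true (2 * k + 3) ++ [none, none, none])
    ([none, none, none] ++ rep true (2 * k + 3) ++ rep false (2 * k + 3)) := by
  refine .head (.right (alt true k ++ [some true]) (alt true (k + 1)) [] false true false ?_ rfl) ?_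
  · rw [show 2 * k + 3 = k + (2 + (k + 1)) by ring, alt_add, alt_add]
    simp [alt]
  refine .head (.left (alt true k ++ [some true]) (alt true k ++ [some true])
    [some false] false false true ?_ rfl) ?_
  · simp [alt_succ']
  have := reach_state k 2 1
  have e : state k 2 1 = alt true k ++ [some true] ++ [some false, some false, some true]
      ++ (alt true k ++ [some true]) ++ [none, none, none] ++ [some false] := by
    have := cons_alt true k
    simp only [Bool.not_true] at this
    have h2 : alt true k ++ [some true] ++ [some false, some false, some true]
      ++ (alt true k ++ [some true]) = alt true k ++ [some true] ++
        [some false, some false, some true] ++ (some true :: alt false k) := by rw [this]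
    rw [h2]
    simp [state, rep]
  rw [e] at this
  rw [show 2 + 2 * k + 1 = 2 * k + 3 by ring, show 1 + 2 * k + 2 = 2 * k + 3 by ring] at this
  exact this

/-- The solution for `4k + 16` pegs. -/
theorem reach_zero_mod_four (k : ℕ) : Reach (2 * k + 9)
    (alt true (2 * k + 8) ++ [none, none, none])
    ([none, none, none] ++ rep true (2 * k + 8) ++ rep false (2 * k + 8)) := by
  refine .head (.right [some true] ([some true, some false] ++ alt true (2 * k + 5)) []
    false true false ?_ rfl) ?_
  · rw [show 2 * k + 8 = 3 + (2 * k + 5) by ring, alt_add]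
    simp [alt]
  refine .head (.left [some true] ([some true, some false] ++ alt true (2 * k + 3))
    [some false, some false, some true, some false] true false true ?_ rfl) ?_
  · rw [show 2 * k + 5 = (2 * k + 3) + 2 by ring, alt_add]
    simp [alt]
  have h := (reach_two_mod_four k).context
    [some true, some true, some false, some true, some true, some false]
    [some false, some false, some true, some false]
  have h2 : Reach 4 ([some true, some true, some false, some true, some true, some false] ++
      ([none, none, none] ++ rep true (2 * k + 3) ++ rep false (2 * k + 3)) ++
      [some false, some false, some true, some false])
      ([none, none, none] ++ rep true (2 * k + 8) ++ rep false (2 * k + 8)) := by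
    refine .head (.left [some true, some true, some false, some true, some true, some false]
      (rep true (2 * k + 3) ++ rep false (2 * k + 3)) [some false] false false true
      (by simp) rfl) ?_
    refine .head (.right [some true, some true, some false, some true, some true]
      ([some true] ++ rep true (2 * k + 3) ++ rep false (2 * k + 3)) [some false]
      false false false (by simp) rfl) ?_
    refine .head (.left [some true, some true, some false, some true, some true]
      (rep true (2 * k + 1)) (rep false (2 * k + 3) ++ rep false 4) true true true ?_ rfl) ?_
    · rw [show 2 * k + 3 = (2 * k) + 3 by ring, rep_add true (2 * k) 1, rep_add true (2 * k) 3]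
      have : some true :: rep true (2 * k) = rep true (2 * k) ++ [some true] := by
        have := rep_add true (2 * k) 1
        simpa [rep] using this
      simp [rep]
      rw [← List.cons_append, this]; simp
    refine .head (.right [] ([some true, some true, some true, some true, some true] ++
      rep true (2 * k + 1)) (rep false (2 * k + 3) ++ rep false 4) true true false
      (by simp) ?_) (.refl _)
    · rw [show 2 * k + 8 = 5 + (2 * k + 1) + 2 by ring, rep_add true, rep_add true,
        show 5 + (2 * k + 1) + 2 = 1 + (2 * k + 3 + 4) by ring, rep_add false, rep_add false]
      simp [rep]
  have := h.trans h2
  rw [show 4 + (2 * k + 3) = 2 * k + 7 by ring] at this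
  simpa using this

/-- The configuration given by a list of cells placed at positions `1, 2, ...`. -/
def place (L : List (Option Bool)) : ℤ → Option Bool :=
  fun p => if 1 ≤ p then (L[(p - 1).toNat]?).join else none

theorem place_append (L M : List (Option Bool)) (p : ℤ) :
    place (L ++ M) p = if p ≤ L.length then place L p else place M (p - L.length) := by
  unfold place
  by_cases h1 : 1 ≤ p
  · by_cases h : p ≤ L.length
    · rw [List.getElem?_append_left (by omega)]; simp [h]
    · rw [List.getElem?_append_right (by omega), if_pos h1, if_neg h, if_pos (by omega)]
      congr 2; omega
  · by_cases h : p ≤ L.length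
    · rw [if_neg h1, if_pos h, if_neg h1]
    · omega

theorem place_of_lt (L : List (Option Bool)) {p : ℤ} (h : p < 1) : place L p = none := by
  unfold place; rw [if_neg (by omega)]

theorem place_of_gt (L : List (Option Bool)) {p : ℤ} (h : L.length < p) : place L p = none := by
  unfold place; rw [if_pos (by omega), List.getElem?_eq_none (by omega)]; rfl

theorem place_three (x y z : Option Bool) (p : ℤ) :
    place [x, y, z] p = if p = 1 then x else if p = 2 then y else if p = 3 then z else none := by
  by_cases h : p < 1
  · rw [place_of_lt _ h]; grind
  by_cases h' : 3 < p
  · rw [place_of_gt _ (by simpa using h')]; grind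
  have : p = 1 ∨ p = 2 ∨ p = 3 := by omega
  obtain rfl | rfl | rfl := this <;> simp [place]

theorem place_move {L L'} (h : LMove L L') : BergeMove 3 (place L) (place L') := by
  obtain ⟨A, B, C, x, y, z, ⟨rfl, rfl⟩ | ⟨rfl, rfl⟩⟩ := h
  · refine ⟨A.length + 1, A.length + 3 + B.length + 1, Or.inr (by push_cast; omega), ?_, ?_⟩
    · intro t h0 h3
      simp only [place_append, place_three, List.length_append, List.length_cons, List.length_nil]
      push_cast
      grind
    · funext p
      simp only [place_append, place_three, List.length_append, List.length_cons, List.length_nil]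
      push_cast
      grind
  · refine ⟨A.length + 3 + B.length + 1, A.length + 1, Or.inl (by push_cast; omega), ?_, ?_⟩
    · intro t h0 h3
      simp only [place_append, place_three, List.length_append, List.length_cons, List.length_nil]
      push_cast
      grind
    · funext p
      simp only [place_append, place_three, List.length_append, List.length_cons, List.length_nil]
      push_cast
      grind

theorem Reach.path {m L L'} (h : Reach m L L') : ∃ f : ℕ → (ℤ → Option Bool),
    f 0 = place L ∧ (∀ i < m, BergeMove 3 (f i) (f (i + 1))) ∧ f m = place L' := by
  induction h with
  | refl L => exact ⟨fun _ => place L, rfl, by simp, rfl⟩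
  | @head m L L' L'' h _ ih =>
    obtain ⟨f, h0, h1, h2⟩ := ih
    refine ⟨fun i => if i = 0 then place L else f (i - 1), by simp, ?_, by simpa using h2⟩
    intro i hi
    rcases i with _ | i
    · simpa [h0] using place_move h
    · simpa using h1 i (by omega)

theorem length_rep (x : Bool) (k : ℕ) : (rep x k).length = k := by
  induction k with
  | zero => rfl
  | succ k ih => simp [rep, ih]

theorem place_cons (x : Option Bool) (L : List (Option Bool)) (p : ℤ) :
    place (x :: L) p = if p = 1 then x else place L (p - 1) := by
  have := place_append [x] L p
  simp only [List.singleton_append, List.length_singleton, Nat.cast_one] at this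
  rw [this]
  by_cases h : p < 1
  · rw [place_of_lt _ h, place_of_lt _ (by omega)]; grind
  by_cases h' : p = 1
  · subst h'; simp [place]
  · rw [if_neg (by omega), if_neg h']

theorem place_rep (x : Bool) (k : ℕ) (p : ℤ) :
    place (rep x k) p = if 1 ≤ p ∧ p ≤ k then some x else none := by
  induction k generalizing p with
  | zero => simp [rep, place]; intros; omega
  | succ k ih => rw [rep, place_cons, ih]; push_cast; grind

theorem place_alt (k : ℕ) (p : ℤ) : place (alt true k) p = altConfig (2 * k) p := by
  induction k generalizing p with
  | zero => simp [alt, place, altConfig]; intros; omega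
  | succ k ih =>
    rw [alt, place_cons, place_cons, ih]
    unfold altConfig
    push_cast
    have : decide ((p - 1 - 1) % 2 = 1) = decide (p % 2 = 1) := by
      congr 1; apply propext; omega
    rw [this]
    by_cases h1 : p = 1
    · subst h1; grind
    by_cases h2 : p - 1 = 1
    · have : p = 2 := by omega
      subst this; grind
    · grind

theorem length_alt (x : Bool) (k : ℕ) : (alt x k).length = 2 * k := by
  induction k with
  | zero => rfl
  | succ k ih => simp [alt, ih]; ring

theorem upper (k : ℕ) : SortsIn 3 (4 * k + 16) (2 * k + 9) := by
  obtain ⟨f, h0, h1, h2⟩ := (reach_zero_mod_four k).path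
  refine ⟨f, ?_, h1, ?_⟩
  · rw [h0]
    funext p
    rw [place_append, place_three, place_alt, length_alt,
      show 2 * (2 * k + 8) = 4 * k + 16 by ring]
    unfold altConfig
    push_cast
    grind
  · have key : ∀ p, f (2 * k + 9) p = if p ≤ 3 then none else if p ≤ 2 * k + 11 then some true
        else if p ≤ 4 * k + 19 then some false else none := by
      intro p
      rw [h2]
      simp only [place_append, place_three, place_rep, List.length_append, List.length_cons,
        List.length_nil, length_rep]
      push_cast
      grind
    have e : (4 * k + 16 + 1) / 2 = 2 * k + 8 := by omega
    refine ⟨4, true, ?_, ?_, ?_⟩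
    · intro p; rw [key]; push_cast; grind
    · intro p; rw [key, e]; push_cast; grind
    · intro p; rw [key, e]; push_cast; grind

end Berge

/-! ### Lower bound -/

namespace Berge

/-- First peg colour of a list of cells. -/
def fstc : List (Option Bool) → Option Bool
  | [] => none
  | x :: L => x.or (fstc L)

/-- Last peg colour of a list of cells. -/
def lstc : List (Option Bool) → Option Bool
  | [] => none
  | x :: L => (lstc L).or x

/-- First cell of a list of cells. -/
def headc : List (Option Bool) → Option Bool
  | [] => none
  | x :: _ => x

/-- Last cell of a list of cells. -/
def tailc : List (Option Bool) → Option Bool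
  | [] => none
  | [x] => x
  | _ :: y :: L => tailc (y :: L)

/-- `1` if both are pegs, of different colours, and `0` otherwise. -/
def dif : Option Bool → Option Bool → ℕ
  | some true, some false => 1
  | some false, some true => 1
  | _, _ => 0

/-- The number of colour changes, ignoring the empty cells. -/
def chg : List (Option Bool) → ℕ
  | [] => 0
  | x :: L => dif x (fstc L) + chg L

/-- The number of colour changes between neighbouring cells. -/
def adj : List (Option Bool) → ℕ
  | [] => 0
  | x :: L => dif x (headc L) + adj L

@[simp] theorem dif_none_left (y) : dif none y = 0 := by rcases y with _ | _ | _ <;> rfl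
@[simp] theorem dif_none_right (y) : dif y none = 0 := by rcases y with _ | _ | _ <;> rfl

theorem fstc_append (A B) : fstc (A ++ B) = (fstc A).or (fstc B) := by
  induction A with
  | nil => simp [fstc]
  | cons x A ih => simp [fstc, ih, Option.or_assoc]

theorem lstc_append (A B) : lstc (A ++ B) = (lstc B).or (lstc A) := by
  induction A with
  | nil => simp [lstc]
  | cons x A ih => simp [lstc, ih, Option.or_assoc]

theorem fstc_none_iff (A) : fstc A = none ↔ lstc A = none := by
  induction A with
  | nil => simp [fstc, lstc]
  | cons x A ih => simp [fstc, lstc, ih, and_comm]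

theorem chg_append (A B) : chg (A ++ B) = chg A + chg B + dif (lstc A) (fstc B) := by
  induction A with
  | nil => simp [chg, lstc]
  | cons x A ih =>
    have h := fstc_none_iff A
    simp only [List.cons_append, chg, ih, fstc_append, lstc]
    rcases hf : fstc A with _ | f <;> rcases hl : lstc A with _ | l
    · simp [hf, hl]; omega
    · simp [hf, hl] at h
    · simp [hf, hl] at h
    · simp [hf, hl]; omega

theorem headc_append (A B) (x) : headc (A ++ x :: B) = headc (A ++ [x]) := by
  cases A <;> rfl

theorem tailc_append (A) (x : Option Bool) (B) : tailc (A ++ x :: B) = tailc (x :: B) := by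
  induction A with
  | nil => rfl
  | cons y A ih =>
    rcases A with _ | ⟨z, A⟩
    · rfl
    · simpa [tailc] using ih

theorem adj_append (A B) : adj (A ++ B) = adj A + adj B + dif (tailc A) (headc B) := by
  induction A with
  | nil => simp [adj, tailc]
  | cons x A ih =>
    rcases A with _ | ⟨y, A⟩
    · simp [adj, tailc, headc]; omega
    · simp only [List.cons_append, adj] at ih ⊢
      simp only [headc, tailc] at ih ⊢
      omega

theorem dif_headc_le (x L) : dif x (headc L) ≤ dif x (fstc L) := by
  rcases L with _ | ⟨y, L⟩
  · simp [headc]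
  · rcases y with _ | y <;> simp [headc, fstc]

theorem tailc_lstc (L) (b : Bool) (h : tailc L = some b) : lstc L = some b := by
  induction L with
  | nil => simp [tailc] at h
  | cons x L ih =>
    rcases L with _ | ⟨y, L⟩
    · simpa [tailc, lstc] using h
    · rw [lstc, ih (by simpa [tailc] using h)]; rfl

theorem dif_tailc_le (x L) : dif (tailc L) x ≤ dif (lstc L) x := by
  rcases h : tailc L with _ | b
  · simp
  · rw [tailc_lstc L b h]

theorem adj_le_chg (L) : adj L ≤ chg L := by
  induction L with
  | nil => simp [adj]
  | cons x L ih => have := dif_headc_le x L; simp only [adj, chg]; omega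

theorem chg_formula1 (A B C) (x y z : Bool) :
    chg (A ++ [some x, some y, some z] ++ B ++ [none, none, none] ++ C) =
    chg A + chg [some x, some y, some z] + chg B + chg C + dif (lstc A) (some x) +
      dif (some z) (fstc B) + dif ((lstc B).or (some z)) (fstc C) := by
  simp only [chg_append, lstc_append, fstc_append]
  simp [chg, lstc, fstc]
  omega

theorem chg_formula2 (A B C) (x y z : Bool) :
    chg (A ++ [none, none, none] ++ B ++ [some x, some y, some z] ++ C) =
    chg A + chg [some x, some y, some z] + chg B + chg C + dif (lstc A) (fstc B) +
      dif ((lstc B).or (lstc A)) (some x) + dif (some z) (fstc C) := by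
  simp only [chg_append, lstc_append, fstc_append]
  simp [chg, lstc, fstc]
  omega

theorem adj_formula1 (A B C) (x y z : Bool) :
    adj (A ++ [some x, some y, some z] ++ B ++ [none, none, none] ++ C) =
    adj A + chg [some x, some y, some z] + adj B + adj C + dif (tailc A) (some x) +
      dif (some z) (headc B) := by
  simp only [adj_append, tailc_append]
  simp [chg, adj, fstc, headc, tailc]
  omega

theorem adj_formula2 (A B C) (x y z : Bool) :
    adj (A ++ [none, none, none] ++ B ++ [some x, some y, some z] ++ C) =
    adj A + chg [some x, some y, some z] + adj B + adj C + dif (tailc B) (some x) +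
      dif (some z) (headc C) := by
  have e : A ++ [none, none, none] ++ B ++ [some x, some y, some z] ++ C =
    (A ++ [none, none, none]) ++ (B ++ ([some x, some y, some z] ++ C)) := by simp
  rw [e]
  simp only [adj_append, tailc_append]
  simp [chg, adj, fstc, headc, tailc]
  omega

set_option maxHeartbeats 4000000 in
theorem right_step (A B C) (x y z : Bool) {L L'}
    (hL : L = A ++ [some x, some y, some z] ++ B ++ [none, none, none] ++ C)
    (hL' : L' = A ++ [none, none, none] ++ B ++ [some x, some y, some z] ++ C) :
    chg L ≤ chg L' + 2 ∧ (adj L = chg L → chg L = chg L' + 2 →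
      adj L' = chg L' ∧ lstc A ≠ none ∧ (lstc B ≠ none ∨ fstc C ≠ none)) := by
  rw [hL, hL', chg_formula1, chg_formula2, adj_formula1, adj_formula2]
  have a1 := adj_le_chg A
  have a2 := adj_le_chg B
  have a3 := adj_le_chg C
  have b1 := dif_tailc_le (some x) A
  have b2 := dif_headc_le (some z) B
  have b3 := dif_tailc_le (some x) B
  have b4 := dif_headc_le (some z) C
  have hB := fstc_none_iff B
  generalize dif (tailc A) (some x) = u1 at *
  generalize dif (some z) (headc B) = u2 at *
  generalize dif (tailc B) (some x) = u3 at *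
  generalize dif (some z) (headc C) = u4 at *
  generalize chg [some x, some y, some z] = u5 at *
  generalize lstc A = lA at *
  generalize lstc B = lB at *
  generalize fstc B = fB at *
  generalize fstc C = fC at *
  rcases fB with _ | fB
  · obtain rfl : lB = none := hB.1 rfl
    rcases lA with _ | _ | _ <;> rcases fC with _ | _ | _ <;> cases x <;> cases z <;>
      simp [dif] at * <;> omega
  · rcases lB with _ | lB
    · simp at hB
    rcases lA with _ | _ | _ <;> rcases fC with _ | _ | _ <;> cases x <;> cases z <;>
      cases fB <;> cases lB <;>
      simp [dif] at * <;> omega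

set_option maxHeartbeats 4000000 in
theorem left_step (A B C) (x y z : Bool) {L L'}
    (hL : L = A ++ [none, none, none] ++ B ++ [some x, some y, some z] ++ C)
    (hL' : L' = A ++ [some x, some y, some z] ++ B ++ [none, none, none] ++ C) :
    chg L ≤ chg L' + 2 ∧ (adj L = chg L → chg L = chg L' + 2 →
      adj L' = chg L' ∧ (lstc A ≠ none ∨ lstc B ≠ none) ∧ fstc C ≠ none) := by
  rw [hL, hL', chg_formula1, chg_formula2, adj_formula1, adj_formula2]
  have a1 := adj_le_chg A
  have a2 := adj_le_chg B
  have a3 := adj_le_chg C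
  have b1 := dif_tailc_le (some x) A
  have b2 := dif_headc_le (some z) B
  have b3 := dif_tailc_le (some x) B
  have b4 := dif_headc_le (some z) C
  have hB := fstc_none_iff B
  generalize dif (tailc A) (some x) = u1 at *
  generalize dif (some z) (headc B) = u2 at *
  generalize dif (tailc B) (some x) = u3 at *
  generalize dif (some z) (headc C) = u4 at *
  generalize chg [some x, some y, some z] = u5 at *
  generalize lstc A = lA at *
  generalize lstc B = lB at *
  generalize fstc B = fB at *
  generalize fstc C = fC at *
  rcases fB with _ | fB
  · obtain rfl : lB = none := hB.1 rfl
    rcases lA with _ | _ | _ <;> rcases fC with _ | _ | _ <;> cases x <;> cases z <;>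
      simp [dif] at * <;> omega
  · rcases lB with _ | lB
    · simp at hB
    rcases lA with _ | _ | _ <;> rcases fC with _ | _ | _ <;> cases x <;> cases z <;>
      cases fB <;> cases lB <;>
      simp [dif] at * <;> omega

/-- The cells `lo, ..., lo + k - 1` of a configuration. -/
def seg (c : ℤ → Option Bool) (lo : ℤ) : ℕ → List (Option Bool)
  | 0 => []
  | k + 1 => c lo :: seg c (lo + 1) k

theorem seg_add (c : ℤ → Option Bool) (lo : ℤ) (k l : ℕ) :
    seg c lo (k + l) = seg c lo k ++ seg c (lo + k) l := by
  induction k generalizing lo with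
  | zero => simp [seg]
  | succ k ih =>
    rw [Nat.add_right_comm, seg, ih, seg]
    push_cast
    rw [show lo + 1 + (k : ℤ) = lo + (k + 1) by ring]; rfl

theorem seg_congr {c c' : ℤ → Option Bool} {lo : ℤ} {k : ℕ}
    (h : ∀ p, lo ≤ p → p < lo + k → c p = c' p) : seg c lo k = seg c' lo k := by
  induction k generalizing lo with
  | zero => rfl
  | succ k ih =>
    rw [seg, seg, h lo le_rfl (by push_cast; omega),
      ih (fun p h1 h2 => h p (by omega) (by push_cast; omega))]

theorem mem_seg {c : ℤ → Option Bool} {lo : ℤ} {k : ℕ} {x} (h : x ∈ seg c lo k) :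
    ∃ p, lo ≤ p ∧ p < lo + k ∧ c p = x := by
  induction k generalizing lo with
  | zero => simp [seg] at h
  | succ k ih =>
    rw [seg, List.mem_cons] at h
    rcases h with h | h
    · exact ⟨lo, le_rfl, by push_cast; omega, h.symm⟩
    · obtain ⟨p, h1, h2, h3⟩ := ih h
      exact ⟨p, by omega, by push_cast; omega, h3⟩

theorem exists_of_lstc {c : ℤ → Option Bool} {lo : ℤ} {k : ℕ} (h : lstc (seg c lo k) ≠ none) :
    ∃ p, lo ≤ p ∧ p < lo + k ∧ c p ≠ none := by
  have key : ∀ L, lstc L ≠ none → ∃ x ∈ L, x ≠ none := by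
    intro L
    induction L with
    | nil => simp [lstc]
    | cons x L ih =>
      intro h
      by_cases hx : x = none
      · subst hx
        obtain ⟨x, h1, h2⟩ := ih (by simpa [lstc] using h)
        exact ⟨x, List.mem_cons_of_mem _ h1, h2⟩
      · exact ⟨x, List.mem_cons_self, hx⟩
  obtain ⟨x, h1, h2⟩ := key _ h
  obtain ⟨p, h3, h4, rfl⟩ := mem_seg h1
  exact ⟨p, h3, h4, h2⟩

theorem exists_of_fstc {c : ℤ → Option Bool} {lo : ℤ} {k : ℕ} (h : fstc (seg c lo k) ≠ none) :
    ∃ p, lo ≤ p ∧ p < lo + k ∧ c p ≠ none :=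
  exists_of_lstc (fun h' => h ((fstc_none_iff _).2 h'))

/-- A configuration with a hole between two pegs. -/
def HasHole (c : ℤ → Option Bool) : Prop :=
  ∃ p r q, p < r ∧ r < q ∧ c p ≠ none ∧ c r = none ∧ c q ≠ none

theorem seg_three (c : ℤ → Option Bool) (lo : ℤ) : seg c lo 3 = [c lo, c (lo + 1), c (lo + 2)] := by
  simp [seg, add_assoc]

theorem seg_split (c : ℤ → Option Bool) (lo u v : ℤ) (a b d : ℕ) (hu : u = lo + a)
    (hv : v = u + 3 + b) : seg c lo (a + 3 + b + 3 + d) =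
      seg c lo a ++ [c u, c (u + 1), c (u + 2)] ++ seg c (u + 3) b ++
        [c v, c (v + 1), c (v + 2)] ++ seg c (v + 3) d := by
  rw [seg_add, seg_add, seg_add, seg_add, seg_three, seg_three]
  push_cast
  rw [show lo + (a + 3 + b + 3 : ℤ) = v + 3 by omega, show lo + (a + 3 + b : ℤ) = v by omega,
    show lo + (a + 3 : ℤ) = u + 3 by omega, ← hu]

theorem step {c c' : ℤ → Option Bool} (h : BergeMove 3 c c') (N : ℕ)
    (hc : ∀ p, c p ≠ none → -(N : ℤ) ≤ p ∧ p ≤ N) (hc' : ∀ p, c' p ≠ none → -(N : ℤ) ≤ p ∧ p ≤ N) :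
    chg (seg c (-N) (2 * N + 1)) ≤ chg (seg c' (-N) (2 * N + 1)) + 2 ∧
    (adj (seg c (-N) (2 * N + 1)) = chg (seg c (-N) (2 * N + 1)) →
      chg (seg c (-N) (2 * N + 1)) = chg (seg c' (-N) (2 * N + 1)) + 2 →
      adj (seg c' (-N) (2 * N + 1)) = chg (seg c' (-N) (2 * N + 1)) ∧ HasHole c') := by
  obtain ⟨i, j, hij, hs, hcc⟩ := h
  have key : ∀ p, c' p = if j ≤ p ∧ p < j + 3 then c (i + (p - j))
    else if i ≤ p ∧ p < i + 3 then none else c p := fun p => by rw [hcc]; rfl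
  have s0 := hs 0 (by norm_num) (by norm_num)
  have s1 := hs 1 (by norm_num) (by norm_num)
  have s2 := hs 2 (by norm_num) (by norm_num)
  rw [add_zero, add_zero] at s0
  push_cast at hij
  clear hs hcc
  obtain ⟨x, hx⟩ := Option.isSome_iff_exists.1 s0.1
  obtain ⟨y, hy⟩ := Option.isSome_iff_exists.1 s1.1
  obtain ⟨z, hz⟩ := Option.isSome_iff_exists.1 s2.1
  have k0 : c' j = some x := by rw [key, if_pos (by omega), ← hx]; congr 1; ring
  have k1 : c' (j + 1) = some y := by rw [key, if_pos (by omega), ← hy]; congr 1; ring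
  have k2 : c' (j + 2) = some z := by rw [key, if_pos (by omega), ← hz]; congr 1; ring
  have l0 : c' i = none := by rw [key, if_neg (by omega), if_pos (by omega)]
  have l1 : c' (i + 1) = none := by rw [key, if_neg (by omega), if_pos (by omega)]
  have l2 : c' (i + 2) = none := by rw [key, if_neg (by omega), if_pos (by omega)]
  have i0 := hc i (by simp [hx])
  have i2 := hc (i + 2) (by simp [hz])
  have j0 := hc' j (by simp [k0])
  have j2 := hc' (j + 2) (by simp [k2])
  have same : ∀ lo (k : ℕ), (lo + k ≤ i ∨ i + 3 ≤ lo) → (lo + k ≤ j ∨ j + 3 ≤ lo) →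
      seg c lo k = seg c' lo k := by
    intro lo k h1 h2
    refine seg_congr fun p hp1 hp2 => ?_
    rw [key, if_neg (by omega), if_neg (by omega)]
  rcases hij with hij | hij
  · obtain ⟨a, ha⟩ : ∃ a : ℕ, j = -N + a := ⟨(j + N).toNat, by omega⟩
    obtain ⟨b, hb⟩ : ∃ b : ℕ, i = j + 3 + b := ⟨(i - j - 3).toNat, by omega⟩
    obtain ⟨d, hd⟩ : ∃ d : ℕ, 2 * N + 1 = a + 3 + b + 3 + d := ⟨(N - i - 2).toNat, by omega⟩
    rw [hd]
    have e := seg_split c (-N) j i a b d ha hb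
    have e' := seg_split c' (-N) j i a b d ha hb
    rw [hx, hy, hz, s0.2, s1.2, s2.2, same _ a (by omega) (by omega),
      same _ b (by omega) (by omega), same _ d (by omega) (by omega)] at e
    rw [k0, k1, k2, l0, l1, l2] at e'
    have := left_step _ _ _ x y z e e'
    refine ⟨this.1, fun h1 h2 => ⟨(this.2 h1 h2).1, ?_⟩⟩
    obtain ⟨_, hl, hr⟩ := this.2 h1 h2
    obtain ⟨q, hq1, hq2, hq3⟩ := exists_of_fstc hr
    rcases hl with hl | hl
    · obtain ⟨p, hp1, hp2, hp3⟩ := exists_of_lstc hl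
      exact ⟨p, i, q, by omega, by omega, hp3, l0, hq3⟩
    · obtain ⟨p, hp1, hp2, hp3⟩ := exists_of_lstc hl
      exact ⟨p, i, q, by omega, by omega, hp3, l0, hq3⟩
  · obtain ⟨a, ha⟩ : ∃ a : ℕ, i = -N + a := ⟨(i + N).toNat, by omega⟩
    obtain ⟨b, hb⟩ : ∃ b : ℕ, j = i + 3 + b := ⟨(j - i - 3).toNat, by omega⟩
    obtain ⟨d, hd⟩ : ∃ d : ℕ, 2 * N + 1 = a + 3 + b + 3 + d := ⟨(N - j - 2).toNat, by omega⟩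
    rw [hd]
    have e := seg_split c (-N) i j a b d ha hb
    have e' := seg_split c' (-N) i j a b d ha hb
    rw [hx, hy, hz, s0.2, s1.2, s2.2, same _ a (by omega) (by omega),
      same _ b (by omega) (by omega), same _ d (by omega) (by omega)] at e
    rw [k0, k1, k2, l0, l1, l2] at e'
    have := right_step _ _ _ x y z e e'
    refine ⟨this.1, fun h1 h2 => ⟨(this.2 h1 h2).1, ?_⟩⟩
    obtain ⟨_, hl, hr⟩ := this.2 h1 h2
    obtain ⟨p, hp1, hp2, hp3⟩ := exists_of_lstc hl
    rcases hr with hr | hr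
    · obtain ⟨q, hq1, hq2, hq3⟩ := exists_of_lstc hr
      exact ⟨p, i, q, by omega, by omega, hp3, l0, hq3⟩
    · obtain ⟨q, hq1, hq2, hq3⟩ := exists_of_fstc hr
      exact ⟨p, i, q, by omega, by omega, hp3, l0, hq3⟩

theorem bounded (n : ℕ) (f : ℕ → (ℤ → Option Bool)) (h0 : f 0 = altConfig n) (m : ℕ)
    (hm : ∀ i < m, BergeMove 3 (f i) (f (i + 1))) :
    ∃ N : ℕ, n ≤ N ∧ ∀ i ≤ m, ∀ p, f i p ≠ none → -(N : ℤ) ≤ p ∧ p ≤ N := by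
  induction m with
  | zero =>
    refine ⟨n, le_rfl, fun i hi p hp => ?_⟩
    obtain rfl : i = 0 := by omega
    rw [h0] at hp
    unfold altConfig at hp
    split_ifs at hp with h
    · omega
    · simp at hp
  | succ m ih =>
    obtain ⟨N, hN, h⟩ := ih (fun i hi => hm i (by omega))
    obtain ⟨s, t, _, _, e⟩ := hm m (by omega)
    refine ⟨N + t.natAbs + 3, by omega, fun i hi p hp => ?_⟩
    rcases Nat.lt_or_ge m i with h' | h'
    · obtain rfl : i = m + 1 := by omega
      rw [e] at hp
      simp only at hp
      push_cast at hp
      split_ifs at hp with g1 g2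
      · omega
      · simp at hp
      · have := h m le_rfl p hp
        omega
    · have := h i h' p hp
      omega

theorem chg_mono (w : Bool) (L) (h : ∀ x ∈ L, x = none ∨ x = some w) :
    chg L = 0 ∧ (fstc L = none ∨ fstc L = some w) := by
  induction L with
  | nil => simp [chg, fstc]
  | cons x L ih =>
    have h1 := ih (fun x hx => h x (List.mem_cons_of_mem _ hx))
    have h2 := h x List.mem_cons_self
    rcases h2 with rfl | rfl <;> rcases h1 with ⟨h1, h3 | h3⟩ <;>
      cases w <;> simp [chg, fstc, h1, h3, dif]

theorem dif_le_one (x y) : dif x y ≤ 1 := by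
  rcases x with _ | _ | _ <;> rcases y with _ | _ | _ <;> simp [dif]

theorem chg_sorted {n : ℕ} (hn : 1 ≤ n) {c : ℤ → Option Bool} (h : IsSorted n c) (N : ℕ)
    (hN : ∀ p, c p ≠ none → -(N : ℤ) ≤ p ∧ p ≤ N) : chg (seg c (-N) (2 * N + 1)) ≤ 1 := by
  obtain ⟨j, w, h1, h2, h3⟩ := h
  have g1 := hN j (Option.isSome_iff_ne_none.1 ((h1 j).2 (by omega)))
  have g2 := hN (j + n - 1) (Option.isSome_iff_ne_none.1 ((h1 _).2 (by omega)))
  have hnone : ∀ p, ¬ (j ≤ p ∧ p < j + (n : ℤ)) → c p = none := by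
    intro p hp
    rw [← h1] at hp
    simpa using hp
  set M := (n + 1) / 2 with hM
  obtain ⟨a, ha⟩ : ∃ a : ℕ, j + M = -N + a := ⟨(j + M + N).toNat, by omega⟩
  obtain ⟨b, hb⟩ : ∃ b : ℕ, 2 * N + 1 = a + b := ⟨(2 * N + 1 - a), by omega⟩
  rw [hb, seg_add, chg_append, ← ha]
  have := dif_le_one (lstc (seg c (-N) a)) (fstc (seg c (j + M) b))
  have e1 : chg (seg c (-N) a) = 0 := by
    refine (chg_mono w _ fun x hx => ?_).1
    obtain ⟨p, p1, p2, rfl⟩ := mem_seg hx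
    by_cases hp : j ≤ p
    · exact Or.inr (h2 p hp (by omega))
    · exact Or.inl (hnone p (by omega))
  have e2 : chg (seg c (j + M) b) = 0 := by
    refine (chg_mono (!w) _ fun x hx => ?_).1
    obtain ⟨p, p1, p2, rfl⟩ := mem_seg hx
    by_cases hp : p < j + n
    · exact Or.inr (h3 p p1 hp)
    · exact Or.inl (hnone p (by omega))
  omega

theorem seg_alt (n k : ℕ) (lo : ℤ) (h1 : 1 ≤ lo) (h2 : lo + k ≤ n) :
    adj (seg (altConfig n) lo (k + 1)) = k := by
  induction k generalizing lo with
  | zero => simp [seg, adj, headc]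
  | succ k ih =>
    rw [seg, adj, ih (lo + 1) (by omega) (by push_cast at h2; omega), seg, headc]
    have : dif (altConfig n lo) (altConfig n (lo + 1)) = 1 := by
      unfold altConfig
      push_cast at h2
      rw [if_pos (by omega), if_pos (by omega)]
      rcases Int.emod_two_eq_zero_or_one lo with h | h
      · have h' : (lo + 1) % 2 = 1 := by omega
        simp [h, h', dif]
      · have h' : (lo + 1) % 2 = 0 := by omega
        simp [h, h', dif]
    omega

theorem seg_alt' (n k : ℕ) (lo : ℤ) (h1 : 1 ≤ lo) (h2 : lo + k ≤ n) :
    chg (seg (altConfig n) lo (k + 1)) = k := by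
  have key : ∀ (k : ℕ) (lo : ℤ), 1 ≤ lo → lo + k ≤ n →
      chg (seg (altConfig n) lo (k + 1)) ≤ k := by
    intro k
    induction k with
    | zero => intro lo _ _; simp [seg, chg, fstc]
    | succ k ih =>
      intro lo h1 h2
      rw [seg, chg]
      have := ih (lo + 1) (by omega) (by push_cast at h2; omega)
      have := dif_le_one (altConfig n lo) (fstc (seg (altConfig n) (lo + 1) (k + 1)))
      omega
  have := key k lo h1 h2
  have := adj_le_chg (seg (altConfig n) lo (k + 1))
  rw [seg_alt n k lo h1 h2] at this
  omega

theorem lstc_none (L) (h : ∀ x ∈ L, x = none) : lstc L = none := by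
  induction L with
  | nil => rfl
  | cons x L ih =>
    rw [lstc, ih (fun x hx => h x (List.mem_cons_of_mem _ hx)), h x List.mem_cons_self]; rfl

theorem start (n N : ℕ) (hn : 1 ≤ n) (hN : n ≤ N) :
    chg (seg (altConfig n) (-N) (2 * N + 1)) = n - 1 ∧
    adj (seg (altConfig n) (-N) (2 * N + 1)) = n - 1 := by
  obtain ⟨k, rfl⟩ : ∃ k, n = k + 1 := ⟨n - 1, by omega⟩
  obtain ⟨d, rfl⟩ : ∃ d, N = k + 1 + d := ⟨N - (k + 1), by omega⟩
  rw [show 2 * (k + 1 + d) + 1 = (k + 1 + d + 1) + (k + 1) + d by ring, seg_add, seg_add]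
  push_cast
  rw [show -((k : ℤ) + 1 + d) + (k + 1 + d + 1) = 1 by ring]
  have n1 : ∀ x ∈ seg (altConfig (k + 1)) (-((k : ℤ) + 1 + d)) (k + 1 + d + 1), x = none := by
    intro x hx
    obtain ⟨p, p1, p2, rfl⟩ := mem_seg hx
    push_cast at p2
    unfold altConfig
    rw [if_neg (by omega)]
  have n2 : ∀ x ∈ seg (altConfig (k + 1))
      (-((k : ℤ) + 1 + d) + (k + 1 + d + 1 + (k + 1))) d, x = none := by
    intro x hx
    obtain ⟨p, p1, p2, rfl⟩ := mem_seg hx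
    unfold altConfig
    rw [if_neg (by push_cast; omega)]
  have c := seg_alt' (k + 1) k 1 le_rfl (by push_cast; omega)
  have a := seg_alt (k + 1) k 1 le_rfl (by push_cast; omega)
  have z1 := (chg_mono true _ (fun x hx => Or.inl (n1 x hx))).1
  have z2 := (chg_mono true _ (fun x hx => Or.inl (n2 x hx))).1
  have l1 := lstc_none _ n1
  have l2 := (fstc_none_iff _).2 (lstc_none _ n2)
  have q1 : chg (seg (altConfig (k + 1)) (-((k : ℤ) + 1 + d)) (k + 1 + d + 1) ++
      seg (altConfig (k + 1)) 1 (k + 1) ++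
      seg (altConfig (k + 1)) (-((k : ℤ) + 1 + d) + (k + 1 + d + 1 + (k + 1))) d) = k := by
    rw [chg_append, chg_append, c, z1, z2, l1, l2]; simp
  refine ⟨q1, le_antisymm ((adj_le_chg _).trans q1.le) ?_⟩
  rw [adj_append, adj_append, a]
  omega

theorem lower (n : ℕ) (hn : 4 ≤ n) (he : n % 2 = 0) (m : ℕ) (h : SortsIn 3 n m) : n / 2 ≤ m := by
  obtain ⟨f, h0, hm, hs⟩ := h
  obtain ⟨N, hN, hb⟩ := bounded n f h0 m hm
  obtain ⟨s1, s2⟩ := start n N (by omega) hN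
  rw [← h0] at s1 s2
  have hf := chg_sorted (by omega) hs N (hb m le_rfl)
  have inv : ∀ i ≤ m, n - 1 ≤ chg (seg (f i) (-N) (2 * N + 1)) + 2 * i ∧
      (n - 1 = chg (seg (f i) (-N) (2 * N + 1)) + 2 * i →
        adj (seg (f i) (-N) (2 * N + 1)) = chg (seg (f i) (-N) (2 * N + 1)) ∧
        (i = 0 ∨ HasHole (f i))) := by
    intro i
    induction i with
    | zero => intro _; exact ⟨by omega, fun _ => ⟨by omega, Or.inl rfl⟩⟩
    | succ i ih =>
      intro hi
      obtain ⟨i1, i2⟩ := ih (by omega)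
      obtain ⟨t1, t2⟩ := step (hm i (by omega)) N (hb i (by omega)) (hb (i + 1) hi)
      refine ⟨by omega, fun e => ?_⟩
      have := t2 (i2 (by omega)).1 (by omega)
      exact ⟨this.1, Or.inr this.2⟩
  obtain ⟨v1, v2⟩ := inv m le_rfl
  by_contra hlt
  rcases (v2 (by omega)).2 with h | ⟨p, r, q, hpr, hrq, hp, hr, hq⟩
  · omega
  · obtain ⟨j, w, g, _, _⟩ := hs
    have gp := (g p).1 (Option.isSome_iff_ne_none.2 hp)
    have gq := (g q).1 (Option.isSome_iff_ne_none.2 hq)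
    have gr := (g r).2 (by omega)
    simp [hr] at gr

end Berge

theorem h_three_moves_zero_mod_four (n : ℕ) (hn : 16 ≤ n) (hmod : n % 4 = 0) :
    SortsIn 3 n (n / 2 + 1) ∧ ∀ m : ℕ, SortsIn 3 n m → n / 2 ≤ m := by
  refine ⟨?_, fun m h => Berge.lower n (by omega) (by omega) m h⟩
  obtain ⟨k, rfl⟩ : ∃ k, n = 4 * k + 16 := ⟨(n - 16) / 4, by omega⟩
  have := Berge.upper k
  rwa [show (4 * k + 16) / 2 + 1 = 2 * k + 9 by omega]
end
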